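/- arXiv:1405.7833 — 2 statements merged into one kernel-verified Lean document; each statement's English description precedes it below -/
import Mathlib

section
/- Let w be a complex number with w ≠ 0 and w ≠ 1, and let z₁, z₂ be complex numbers with |z₁| > 1 and 0 < |z₂| < 1. Then (1 − z₁w)/((1 − z₁)(1 − w)) + (1 − (z₂w)⁻¹)/((1 − z₂⁻¹)(1 − w⁻¹)) = −1 − Σ_{n=1}^∞ z₁^{−n} − Σ_{n=1}^∞ z₂^{n}, both series converging absolutely. (This is the analytic content of the paper's delta-function identity η(u+s)/(η(u)η(s)) + η(−u−s)/(η(−u)η(−s)) = −δ(q^{2u}), where the first summand is expanded around z = ∞ and the second around z = 0: every Laurent coefficient of the combined expansion equals −1.) -/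
/-!
Partial fractions separate the variables: `(1 - ab)/((1 - a)(1 - b)) = 1/(1 - a) + b/(1 - b)`.
Applied to `(z₁, w)` and to `(z₂⁻¹, w⁻¹)`, this splits the left-hand side into
`1/(1 - z₁) + 1/(1 - z₂⁻¹)` and the `w`-part `w/(1 - w) + w⁻¹/(1 - w⁻¹) = -1`. The two remaining
fractions are minus the geometric series `∑_{n≥1} xⁿ = x/(1 - x)` at `x = z₁⁻¹` and `x = z₂`.
-/

theorem eta_partial_fractions {a b : ℂ} (ha : a ≠ 1) (hb : b ≠ 1) :
    (1 - a * b) / ((1 - a) * (1 - b)) = 1 / (1 - a) + b / (1 - b) := by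
  have ha' : 1 - a ≠ 0 := sub_ne_zero.mpr ha.symm
  have hb' : 1 - b ≠ 0 := sub_ne_zero.mpr hb.symm
  field_simp
  ring

/-- The geometric series without its constant term; the right-hand side is `-1/(1 - x⁻¹)`, the form
in which it appears after the partial fraction decomposition. -/
theorem tsum_geometric_succ_eq {x : ℂ} (hx0 : x ≠ 0) (hx : ‖x‖ < 1) :
    ∑' n : ℕ, x ^ (n + 1) = -(1 / (1 - x⁻¹)) := by
  have hx1 : 1 - x ≠ 0 := sub_ne_zero.mpr (by rintro rfl; simp at hx)
  have hx1' : x - 1 ≠ 0 := by rwa [← neg_sub, neg_ne_zero]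
  simp_rw [pow_succ]
  rw [tsum_mul_right, tsum_geometric_of_norm_lt_one hx]
  field_simp
  ring

theorem summable_norm_geometric_succ {x : ℂ} (hx : ‖x‖ < 1) :
    Summable (fun n : ℕ => ‖x ^ (n + 1)‖) :=
  (summable_nat_add_iff 1).mpr (summable_norm_geometric_of_norm_lt_one hx)

/-- The delta-function identity
`η(u+s)/(η(u)η(s)) + η(-u-s)/(η(-u)η(-s)) = -δ(q^{2u})`:
with the first summand expanded around `z = ∞` (at `z₁` with `|z₁| > 1`) and the second
around `z = 0` (at `z₂` with `0 < |z₂| < 1`), every Laurent coefficient of the combined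
expansion equals `-1`.  In multiplicative variables:
`(1 - z₁w)/((1 - z₁)(1 - w)) + (1 - (z₂w)⁻¹)/((1 - z₂⁻¹)(1 - w⁻¹))
  = -1 - ∑_{n≥1} z₁^{-n} - ∑_{n≥1} z₂^{n}`, both series converging absolutely. -/
theorem eta_delta_identity (w z₁ z₂ : ℂ) (hw0 : w ≠ 0) (hw1 : w ≠ 1)
    (hz₁ : 1 < ‖z₁‖) (hz₂0 : 0 < ‖z₂‖) (hz₂ : ‖z₂‖ < 1) :
    Summable (fun n : ℕ => ‖z₁⁻¹ ^ (n + 1)‖) ∧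
    Summable (fun n : ℕ => ‖z₂ ^ (n + 1)‖) ∧
    (1 - z₁ * w) / ((1 - z₁) * (1 - w)) +
      (1 - (z₂ * w)⁻¹) / ((1 - z₂⁻¹) * (1 - w⁻¹)) =
      -1 - (∑' n : ℕ, z₁⁻¹ ^ (n + 1)) - (∑' n : ℕ, z₂ ^ (n + 1)) := by
  have hz₁0 : z₁ ≠ 0 := norm_pos_iff.mp (one_pos.trans hz₁)
  have hz₂0' : z₂ ≠ 0 := norm_pos_iff.mp hz₂0
  have hz₁1 : z₁ ≠ 1 := by rintro rfl; simp at hz₁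
  have hz₂1 : z₂⁻¹ ≠ 1 := by
    intro h
    rw [inv_eq_one.mp h] at hz₂
    simp at hz₂
  have hz₁inv : ‖z₁⁻¹‖ < 1 := by
    rw [norm_inv]
    exact inv_lt_one_of_one_lt₀ hz₁
  refine ⟨summable_norm_geometric_succ hz₁inv, summable_norm_geometric_succ hz₂, ?_⟩
  have hw : w / (1 - w) + w⁻¹ / (1 - w⁻¹) = -1 := by
    have h1 : 1 - w ≠ 0 := sub_ne_zero.mpr hw1.symm
    have h2 : w - 1 ≠ 0 := sub_ne_zero.mpr hw1
    field_simp
    ring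
  rw [mul_inv, eta_partial_fractions hz₁1 hw1,
    eta_partial_fractions hz₂1 (inv_ne_one.mpr hw1),
    tsum_geometric_succ_eq (inv_ne_zero hz₁0) hz₁inv, tsum_geometric_succ_eq hz₂0' hz₂, inv_inv]
  linear_combination hw
end

section
/- Let q, Z, X be complex numbers with q ≠ 0, Z ≠ 0, X ≠ 1, Z ≠ q² and Z ≠ q⁻². Define M₂₁(q,Z,X) to be the matrix obtained from M(q,Z,X) by exchanging the two tensor factors of ℂ²⊗ℂ², i.e. (M₂₁)_{(a,b),(c,d)} = M_{(b,a),(d,c)}; concretely, M₂₁ is M with its middle 2×2 block transposed along the anti-diagonal, so its middle block is [[q(1−Z)/(1−q²Z), Z(1−q²)(1−X·Z⁻¹)/((1−X)(1−q²Z))],[(1−q²)(1−XZ)/((1−X)(1−q²Z)), q(1−q⁻²X)(1−q²X)(1−Z)/((1−X)²(1−q²Z))]]. Then M(q, Z⁻¹, X) · M₂₁(q, Z, X) = M₂₁(q, Z, X) · M(q, Z⁻¹, X) = I₄. (This is the unitarity condition R⁺₂₁(u,P)⁻¹ = R⁻(−u,P) of the dynamical R-matrix, the scalar factors cancelling by ρ⁺(u)ρ⁻(−u)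 = 1.) -/
/-!
Both matrices are the identity outside the middle `2×2` block, so unitarity reduces to four scalar
identities. After replacing `1 - q² Z⁻¹` by `(Z - q²) / Z`, the off-diagonal entries cancel
identically and the diagonal ones amount to
`(1 - q²)² (Z - X) (1 - X Z) - (q² - X) (1 - q² X) (1 - Z)² = (1 - X)² (Z - q²) (1 - q² Z)`.
A one-sided inverse of a square matrix over a field is two-sided, so one product suffices.
-/

open Matrix

/-- The trigonometric dynamical R-matrix `R⁺(u,P)` of `U_{q,x}(ŝl₂)`, with `Z = q^{2u}`,
`X = q^{2P}` and the scalar normalization `ρ⁺(z)` removed. -/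
noncomputable def Mdyn (q Z X : ℂ) : Matrix (Fin 4) (Fin 4) ℂ :=
  !![1, 0, 0, 0;
     0, q * (1 - (q ^ 2)⁻¹ * X) * (1 - q ^ 2 * X) * (1 - Z) / ((1 - X) ^ 2 * (1 - q ^ 2 * Z)),
        (1 - q ^ 2) * (1 - X * Z) / ((1 - X) * (1 - q ^ 2 * Z)), 0;
     0, Z * (1 - q ^ 2) * (1 - X * Z⁻¹) / ((1 - X) * (1 - q ^ 2 * Z)),
        q * (1 - Z) / (1 - q ^ 2 * Z), 0;
     0, 0, 0, 1]

/-- `Mdyn` with the two tensor factors of `ℂ² ⊗ ℂ²` exchanged: the middle `2×2` block is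
transposed along the anti-diagonal. -/
noncomputable def Mdyn21 (q Z X : ℂ) : Matrix (Fin 4) (Fin 4) ℂ :=
  !![1, 0, 0, 0;
     0, q * (1 - Z) / (1 - q ^ 2 * Z),
        Z * (1 - q ^ 2) * (1 - X * Z⁻¹) / ((1 - X) * (1 - q ^ 2 * Z)), 0;
     0, (1 - q ^ 2) * (1 - X * Z) / ((1 - X) * (1 - q ^ 2 * Z)),
        q * (1 - (q ^ 2)⁻¹ * X) * (1 - q ^ 2 * X) * (1 - Z) / ((1 - X) ^ 2 * (1 - q ^ 2 * Z)), 0;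
     0, 0, 0, 1]

/-- The unitarity condition `R⁺₂₁(u,P)⁻¹ = R⁻(-u,P)` of the dynamical R-matrix (the
scalar factors cancelling by `ρ⁺(u)ρ⁻(-u) = 1`):
`M(q, Z⁻¹, X)` is a two-sided inverse of `M₂₁(q, Z, X)`. -/
theorem Mdyn_unitarity (q Z X : ℂ) (hq : q ≠ 0) (hZ : Z ≠ 0) (hX : X ≠ 1)
    (hZq : Z ≠ q ^ 2) (hZq' : Z ≠ (q ^ 2)⁻¹) :
    Mdyn q Z⁻¹ X * Mdyn21 q Z X = 1 ∧ Mdyn21 q Z X * Mdyn q Z⁻¹ X = 1 := by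
  have h1 : 1 - X ≠ 0 := sub_ne_zero.mpr hX.symm
  have h2 : 1 - q ^ 2 * Z ≠ 0 := fun h =>
    hZq' (eq_inv_of_mul_eq_one_right (sub_eq_zero.mp h).symm)
  -- `field_simp` also meets this denominator in commuted form
  have h2' : 1 - Z * q ^ 2 ≠ 0 := by rwa [mul_comm]
  have h3 : Z - q ^ 2 ≠ 0 := sub_ne_zero.mpr hZq
  have h4 : 1 - q ^ 2 * Z⁻¹ = (Z - q ^ 2) / Z := by field_simp
  have key : Mdyn q Z⁻¹ X * Mdyn21 q Z X = 1 := by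
    unfold Mdyn Mdyn21
    rw [h4]
    ext i j
    fin_cases i <;> fin_cases j <;>
      simp [Matrix.mul_apply, Fin.sum_univ_four] <;> field_simp <;> ring
  exact ⟨key, mul_eq_one_comm.mp key⟩
end
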